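/- arXiv:1410.4128 — 2 statements merged into one kernel-verified Lean document; each statement's English description precedes it below -/
import Mathlib

section
/- Let f ∈ GR_D(Q0,ε) for some ε ∈ (0, 1/2^{n−1}), let p > 1 satisfy p^p/(p−1)^{p−1} = 1/(2^{n−1}ε), and set γ = (p/(p−1))^p. Then γ > 1 and for every t ∈ (0,1], f^{**}(t/γ) ≤ γ^{1/p} f^{**}(t). -/
open MeasureTheory Set Real

noncomputable section

/-- The unit cube `Q₀ = [0,1]ⁿ` in `ℝⁿ`. -/
def Q0 (n : ℕ) : Set (Fin n → ℝ) := Set.Icc 0 1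

/-- The integral average `f_Q = (1/|Q|) ∫_Q f` of `f` over `Q`. -/
def avgOn {n : ℕ} (f : (Fin n → ℝ) → ℝ) (Q : Set (Fin n → ℝ)) : ℝ :=
  (volume Q).toReal⁻¹ * ∫ x in Q, f x

/-- The mean oscillation `Ω(f,Q) = (1/|Q|) ∫_Q |f - f_Q|` of `f` over `Q`. -/
def oscOn {n : ℕ} (f : (Fin n → ℝ) → ℝ) (Q : Set (Fin n → ℝ)) : ℝ :=
  (volume Q).toReal⁻¹ * ∫ x in Q, |f x - avgOn f Q|

/-- `Q` is a dyadic subcube of `[0,1]ⁿ` of side length `2⁻ᵏ`,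
i.e. `Q = ∏ᵢ [mᵢ 2⁻ᵏ, (mᵢ+1) 2⁻ᵏ]` with `0 ≤ mᵢ < 2ᵏ`. -/
def IsDyadicSide (n k : ℕ) (Q : Set (Fin n → ℝ)) : Prop :=
  ∃ m : Fin n → ℕ, (∀ i, m i < 2 ^ k) ∧
    Q = Set.Icc (fun i => (m i : ℝ) / 2 ^ k) (fun i => ((m i : ℝ) + 1) / 2 ^ k)

/-- `Q` belongs to the family `𝒟` of dyadic subcubes of `[0,1]ⁿ`. -/
def IsDyadic (n : ℕ) (Q : Set (Fin n → ℝ)) : Prop := ∃ k, IsDyadicSide n k Q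

/-- One-dimensional integral average `g_J` over a set `J ⊆ ℝ`. -/
def avgI (g : ℝ → ℝ) (J : Set ℝ) : ℝ := (volume J).toReal⁻¹ * ∫ u in J, g u

/-- One-dimensional mean oscillation `Ω(g,J)` over a set `J ⊆ ℝ`. -/
def oscI (g : ℝ → ℝ) (J : Set ℝ) : ℝ :=
  (volume J).toReal⁻¹ * ∫ u in J, |g u - avgI g J|

/-- `g : (0,1] → ℝ` is the nonincreasing, left-continuous rearrangement of
`f : [0,1]ⁿ → ℝ`, i.e. it is nonincreasing, left continuous and equimeasurable with `f`. -/
def IsRearrangement {n : ℕ} (f : (Fin n → ℝ) → ℝ) (g : ℝ → ℝ) : Prop :=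
  AntitoneOn g (Set.Ioc 0 1) ∧
  (∀ t ∈ Set.Ioc (0:ℝ) 1, ContinuousWithinAt g (Set.Iio t) t) ∧
  ∀ lam : ℝ, volume {t ∈ Set.Ioc (0:ℝ) 1 | lam < g t} = volume {x ∈ Q0 n | lam < f x}

/-- The Hardy average `F(t) = (1/t) ∫_0^t g(u) du`. -/
def hardyAvg (g : ℝ → ℝ) (t : ℝ) : ℝ := t⁻¹ * ∫ u in Set.Ioc (0:ℝ) t, g u

/-- The Gurov–Reshetnyak modulus
`v(f;σ) = sup { Ω(f,Q)/f_Q : Q ∈ 𝒟, ℓ(Q) ≤ σ, f_Q > 0 }` (equal to `0` if no such `Q` exists,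
by the convention `sSup ∅ = 0` in `ℝ`). -/
def vGR {n : ℕ} (f : (Fin n → ℝ) → ℝ) (σ : ℝ) : ℝ :=
  sSup {r : ℝ | ∃ k Q, IsDyadicSide n k Q ∧ ((2:ℝ) ^ k)⁻¹ ≤ σ ∧
    0 < avgOn f Q ∧ r = oscOn f Q / avgOn f Q}

/-- `f` satisfies the dyadic Gurov–Reshetnyak condition `f ∈ GR_𝒟(Q₀,ε)`:
`f : Q₀ → [0,∞)` is integrable and `Ω(f,Q) ≤ ε f_Q` for every dyadic cube `Q`. -/
def GRcond {n : ℕ} (f : (Fin n → ℝ) → ℝ) (ε : ℝ) : Prop :=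
  IntegrableOn f (Q0 n) ∧ (∀ x ∈ Q0 n, 0 ≤ f x) ∧
    ∀ Q, IsDyadic n Q → oscOn f Q ≤ ε * avgOn f Q


open Filter Topology

/-- half-open dyadic cube -/
def hCube {n : ℕ} (k : ℕ) (m : Fin n → ℕ) : Set (Fin n → ℝ) :=
  Set.pi univ (fun i => Ico ((m i : ℝ) / 2 ^ k) (((m i : ℝ) + 1) / 2 ^ k))

/-- closed dyadic cube -/
def cCube {n : ℕ} (k : ℕ) (m : Fin n → ℕ) : Set (Fin n → ℝ) :=
  Set.Icc (fun i => (m i : ℝ) / 2 ^ k) (fun i => ((m i : ℝ) + 1) / 2 ^ k)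

lemma hCube_ae {n : ℕ} (k : ℕ) (m : Fin n → ℕ) : hCube k m =ᵐ[volume] cCube k m :=
  Measure.univ_pi_Ico_ae_eq_Icc

lemma hCube_meas {n : ℕ} (k : ℕ) (m : Fin n → ℕ) : MeasurableSet (hCube k m) :=
  MeasurableSet.univ_pi (fun _ => measurableSet_Ico)

lemma cCube_vol {n : ℕ} (k : ℕ) (m : Fin n → ℕ) :
    (volume (cCube k m)).toReal = ((2 ^ k : ℝ)⁻¹) ^ n := by
  unfold cCube
  rw [Real.volume_Icc_pi_toReal]
  · have : ∀ i : Fin n, ((m i : ℝ) + 1) / 2 ^ k - (m i : ℝ) / 2 ^ k = (2 ^ k : ℝ)⁻¹ := by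
      intro i; ring
    simp [this]
  · intro i
    show (m i : ℝ) / 2 ^ k ≤ ((m i : ℝ) + 1) / 2 ^ k
    gcongr; linarith

lemma hCube_vol {n : ℕ} (k : ℕ) (m : Fin n → ℕ) :
    volume.real (hCube k m) = ((2 ^ k : ℝ)⁻¹) ^ n := by
  rw [← cCube_vol k m, Measure.real, measure_congr (hCube_ae k m)]

lemma cCube_sub {n : ℕ} (k : ℕ) (m : Fin n → ℕ) (hm : ∀ i, m i < 2 ^ k) :
    cCube k m ⊆ Q0 n := by
  intro x hx
  refine ⟨fun i => le_trans ?_ (hx.1 i), fun i => (hx.2 i).trans ?_⟩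
  · show (0:ℝ) ≤ (m i : ℝ) / 2 ^ k
    positivity
  · show ((m i : ℝ) + 1) / 2 ^ k ≤ 1
    rw [div_le_one (by positivity)]
    exact_mod_cast hm i

lemma hCube_sub_c {n : ℕ} (k : ℕ) (m : Fin n → ℕ) : hCube k m ⊆ cCube k m := by
  intro x hx
  exact ⟨fun i => (hx i trivial).1, fun i => (hx i trivial).2.le⟩

lemma hCube_sub {n : ℕ} (k : ℕ) (m : Fin n → ℕ) (hm : ∀ i, m i < 2 ^ k) :
    hCube k m ⊆ Q0 n := (hCube_sub_c k m).trans (cCube_sub k m hm)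

def chd {n : ℕ} (m : Fin n → ℕ) (e : Fin n → Fin 2) : Fin n → ℕ := fun i => 2 * m i + (e i : ℕ)

lemma chd_lt {n k : ℕ} (m : Fin n → ℕ) (hm : ∀ i, m i < 2 ^ k) (e : Fin n → Fin 2) :
    ∀ i, chd m e i < 2 ^ (k + 1) := by
  intro i
  have := hm i
  have := (e i).2
  unfold chd
  rw [pow_succ]
  omega

lemma mem_iff_floor (k m : ℕ) (x : ℝ) :
    x ∈ Ico ((m : ℝ) / 2 ^ k) (((m : ℝ) + 1) / 2 ^ k) ↔ ⌊x * 2 ^ k⌋ = m := by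
  rw [Int.floor_eq_iff, mem_Ico, div_le_iff₀ (by positivity), lt_div_iff₀ (by positivity)]
  simp

lemma hCube_mem {n : ℕ} (k : ℕ) (m : Fin n → ℕ) (x : Fin n → ℝ) :
    x ∈ hCube k m ↔ ∀ i, ⌊x i * 2 ^ k⌋ = m i := by
  unfold hCube
  simp only [mem_univ_pi, mem_iff_floor]

lemma hCube_disj {n : ℕ} (k : ℕ) (m m' : Fin n → ℕ) (h : m ≠ m') :
    Disjoint (hCube k m) (hCube k m') := by
  rw [Set.disjoint_left]
  intro x hx hx'
  rw [hCube_mem] at hx hx'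
  apply h; funext i
  have := hx i; have := hx' i; omega

lemma hCube_union {n : ℕ} (k : ℕ) (m : Fin n → ℕ) :
    hCube k m = ⋃ e : Fin n → Fin 2, hCube (k + 1) (chd m e) := by
  ext x
  simp only [mem_iUnion, hCube_mem]
  have key : ∀ y : ℝ, ⌊y⌋ = ⌊y * 2⌋ / 2 := by
    intro y
    have h1 := Int.floor_le y
    have h2 := Int.lt_floor_add_one y
    have h3 : 2 * ⌊y⌋ ≤ ⌊y * 2⌋ := by rw [Int.le_floor]; push_cast; linarith
    have h4 : ⌊y * 2⌋ < 2 * ⌊y⌋ + 2 := by rw [Int.floor_lt]; push_cast; linarith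
    omega
  have key2 : ∀ i, ⌊x i * 2 ^ k⌋ = ⌊x i * 2 ^ (k+1)⌋ / 2 := by
    intro i; rw [key, pow_succ, mul_assoc]
  constructor
  · intro h
    refine ⟨fun i => if ⌊x i * 2 ^ (k+1)⌋ = 2 * m i then 0 else 1, fun i => ?_⟩
    have h1 := h i
    rw [key2] at h1
    simp only [chd]
    split_ifs with h2
    · simpa using h2
    · simp only [Fin.val_one, Nat.cast_add, Nat.cast_mul, Nat.cast_ofNat, Nat.cast_one]; omega
  · rintro ⟨e, he⟩ i
    have h1 := he i
    have := (e i).2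
    rw [key2, h1]
    unfold chd
    push_cast
    omega

lemma int_children {n : ℕ} (k : ℕ) (m : Fin n → ℕ) (g : (Fin n → ℝ) → ℝ)
    (hg : IntegrableOn g (hCube k m)) :
    ∫ x in hCube k m, g x = ∑ e : Fin n → Fin 2, ∫ x in hCube (k+1) (chd m e), g x := by
  conv_lhs => rw [hCube_union]
  apply integral_iUnion_fintype
  · intro e; exact hCube_meas _ _
  · intro e e' hee
    apply hCube_disj
    intro h
    apply hee
    funext i
    have := congrFun h i
    unfold chd at this
    ext; omega
  · intro e
    apply hg.mono_set
    rw [hCube_union k m]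
    exact subset_iUnion (fun e => hCube (k+1) (chd m e)) e

lemma chd_sub {n : ℕ} (k : ℕ) (m : Fin n → ℕ) (e : Fin n → Fin 2) :
    hCube (k+1) (chd m e) ⊆ hCube k m := by
  rw [hCube_union k m]
  exact subset_iUnion (fun e => hCube (k+1) (chd m e)) e

lemma osc_hCube {n : ℕ} {f : (Fin n → ℝ) → ℝ} {ε : ℝ} (hf : GRcond f ε) {k : ℕ} {m : Fin n → ℕ}
    (hm : ∀ i, m i < 2 ^ k) {lam : ℝ}
    (hl : ∫ x in hCube k m, f x ≤ lam * ((2 ^ k : ℝ)⁻¹) ^ n) (hε : 0 ≤ ε) :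
    ∫ x in hCube k m, max (f x - lam) 0 ≤ ε / 2 * (lam * ((2 ^ k : ℝ)⁻¹) ^ n) := by
  have hosc := hf.2.2 (cCube k m) ⟨k, m, hm, rfl⟩
  unfold oscOn at hosc
  set a := avgOn f (cCube k m) with ha
  have hv : (0:ℝ) < ((2 ^ k : ℝ)⁻¹) ^ n := by positivity
  set v := ((2 ^ k : ℝ)⁻¹) ^ n with hvd
  have ha' : a * v = ∫ x in hCube k m, f x := by
    rw [ha, avgOn, cCube_vol, setIntegral_congr_set (hCube_ae k m), ← hvd]
    field_simp
  rw [cCube_vol, ← setIntegral_congr_set (hCube_ae k m), ← hvd, inv_mul_le_iff₀ hv] at hosc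
  have hi : IntegrableOn f (hCube k m) := hf.1.mono_set (hCube_sub k m hm)
  have hfin : IsFiniteMeasure (volume.restrict (hCube k m)) := by
    constructor
    rw [Measure.restrict_apply_univ, measure_congr (hCube_ae k m)]
    exact isCompact_Icc.measure_lt_top
  have hal : a ≤ lam := by
    rw [← ha'] at hl
    exact le_of_mul_le_mul_right hl hv
  have hia : IntegrableOn (fun x => f x - a) (hCube k m) := hi.sub (integrable_const a)
  have hil : IntegrableOn (fun x => f x - lam) (hCube k m) := hi.sub (integrable_const lam)
  have h0 : ∫ x in hCube k m, (f x - a) = 0 := by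
    rw [integral_sub hi (integrable_const a)]
    simp only [integral_const, smul_eq_mul, measureReal_restrict_apply_univ, hCube_vol]
    rw [← ha']; ring
  have h1 : ∫ x in hCube k m, max (f x - lam) 0 ≤
      ∫ x in hCube k m, (|f x - a| + (f x - a)) / 2 := by
    apply integral_mono
    · exact hil.pos_part
    · exact (hia.abs.add hia).div_const 2
    · intro x
      show max (f x - lam) 0 ≤ (|f x - a| + (f x - a)) / 2
      rcases abs_cases (f x - a) with h | h <;> rcases max_cases (f x - lam) 0 with h' | h' <;> linarith
  rw [integral_div, integral_add hia.abs hia, h0, add_zero] at h1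
  nlinarith

lemma main_ineq {n : ℕ} {f : (Fin n → ℝ) → ℝ} {ε : ℝ} (hf : GRcond f ε) (hε : 0 ≤ ε)
    (s lam : ℝ) (hl0 : 0 ≤ lam) (hs : s ≤ lam) (U : ℕ → Set (Fin n → ℝ)) (hUm : ∀ N, MeasurableSet (U N))
    (hU : ∀ N (m : Fin n → ℕ), (∀ i, m i < 2 ^ N) → 
      ∫ x in hCube N m, f x ≤ lam * ((2 ^ N : ℝ)⁻¹) ^ n → hCube N m ⊆ U N) (N : ℕ) :
    ∀ k (m : Fin n → ℕ), (∀ i, m i < 2 ^ k) → ∫ x in hCube k m, f x ≤ lam * ((2 ^ k : ℝ)⁻¹) ^ n →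
    (lam - s) * ∫ x in hCube k m, max (f x - lam) 0 ≤
      (2 ^ n * (ε / 2) * lam) * (∫ x in hCube k m, max (f x - s) 0) +
      (lam - s) * ∫ x in hCube k m, (U (k+N)).indicator (fun x => max (f x - lam) 0) x := by
  have hs' : 0 ≤ lam - s := by linarith
  have hQ : IsFiniteMeasure (volume.restrict (Q0 n)) := by
    constructor
    rw [Measure.restrict_apply_univ]
    exact isCompact_Icc.measure_lt_top
  have hil : ∀ c, IntegrableOn (fun x => max (f x - c) 0) (Q0 n) := fun c =>
    Integrable.pos_part (hf.1.sub (integrable_const c))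
  induction N with
  | zero =>
    intro k m hm hl
    have h1 : ∫ x in hCube k m, (U (k+0)).indicator (fun x => max (f x - lam) 0) x
        = ∫ x in hCube k m, max (f x - lam) 0 := by
      apply setIntegral_congr_fun (hCube_meas k m)
      intro x hx
      exact indicator_of_mem (hU k m hm hl hx) _
    rw [h1]
    have : 0 ≤ ∫ x in hCube k m, max (f x - s) 0 := integral_nonneg (fun x => le_max_right _ _)
    have : 0 ≤ (2 ^ n * (ε / 2) * lam) * ∫ x in hCube k m, max (f x - s) 0 := by positivity
    linarith
  | succ N ih =>
    intro k m hm hl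
    by_cases hch : ∀ e : Fin n → Fin 2, ∫ x in hCube (k+1) (chd m e), f x ≤ lam * ((2 ^ (k+1) : ℝ)⁻¹) ^ n
    · rw [int_children k m _ ((hil lam).mono_set (hCube_sub k m hm)),
        int_children k m _ ((hil s).mono_set (hCube_sub k m hm)),
        int_children k m _ (((hil lam).mono_set (hCube_sub k m hm)).indicator (hUm _)),
        Finset.mul_sum, Finset.mul_sum, Finset.mul_sum, ← Finset.sum_add_distrib]
      apply Finset.sum_le_sum
      intro e _
      have := ih (k+1) (chd m e) (chd_lt m hm e) (hch e)
      rwa [show k + 1 + N = k + (N + 1) by ring] at this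
    · push Not at hch
      obtain ⟨e, he⟩ := hch
      have h1 := osc_hCube hf hm hl hε
      have hi : IntegrableOn f (hCube (k+1) (chd m e)) := hf.1.mono_set (hCube_sub _ _ (chd_lt m hm e))
      have hfin : IsFiniteMeasure (volume.restrict (hCube (k+1) (chd m e))) := by
        constructor
        rw [Measure.restrict_apply_univ, measure_congr (hCube_ae _ _)]
        exact isCompact_Icc.measure_lt_top
      have h2 : ∫ x in hCube (k+1) (chd m e), (f x - s) ≤ ∫ x in hCube (k+1) (chd m e), max (f x - s) 0 := by
        apply integral_mono
        · exact hi.sub (integrable_const s)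
        · exact (hil s).mono_set (hCube_sub _ _ (chd_lt m hm e))
        · intro x; exact le_max_left _ _
      have h3 : ∫ x in hCube (k+1) (chd m e), max (f x - s) 0 ≤ ∫ x in hCube k m, max (f x - s) 0 := by
        apply setIntegral_mono_set ((hil s).mono_set (hCube_sub k m hm))
        · exact Eventually.of_forall (fun x => le_max_right _ _)
        · exact (chd_sub k m e).eventuallyLE
      rw [integral_sub hi (integrable_const s)] at h2
      simp only [integral_const, smul_eq_mul, measureReal_restrict_apply_univ, hCube_vol] at h2
      have h4 : 0 ≤ (lam - s) * ∫ x in hCube k m, (U (k+(N+1))).indicator (fun x => max (f x - lam) 0) x := by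
        apply mul_nonneg hs'
        apply integral_nonneg
        intro x
        exact indicator_nonneg (fun x _ => le_max_right _ _) x
      have h5 : ((2 ^ k : ℝ)⁻¹) ^ n = 2 ^ n * ((2 ^ (k+1) : ℝ)⁻¹) ^ n := by
        rw [← mul_pow]; congr 1; rw [pow_succ]; field_simp
      rw [h5] at h1
      set w := ((2 ^ (k+1) : ℝ)⁻¹) ^ n
      have h6 : (lam - s) * w ≤ ∫ x in hCube k m, max (f x - s) 0 := by linarith
      have hc : 0 ≤ 2 ^ n * (ε / 2) * lam := by positivity
      calc _ ≤ (lam - s) * (ε / 2 * (lam * (2 ^ n * w))) := by gcongr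
        _ = 2 ^ n * (ε / 2) * lam * ((lam - s) * w) := by ring
        _ ≤ 2 ^ n * (ε / 2) * lam * ∫ x in hCube k m, max (f x - s) 0 := by gcongr
        _ ≤ _ := by linarith

lemma Q0_meas (n : ℕ) : MeasurableSet (Q0 n) := measurableSet_Icc

lemma cCube_ball {n : ℕ} (k : ℕ) (m : Fin n → ℕ) :
    cCube k m = Metric.closedBall (fun i => ((m i : ℝ) + 1 / 2) / 2 ^ k) ((2 ^ k : ℝ)⁻¹ / 2) := by
  rw [closedBall_pi _ (by positivity)]
  unfold cCube
  rw [← pi_univ_Icc]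
  congr 1
  funext i
  rw [Real.closedBall_eq_Icc]
  congr 1 <;> ring

/-- the union of the generation `N` cubes with small average -/
def Uset {n : ℕ} (f : (Fin n → ℝ) → ℝ) (lam : ℝ) (N : ℕ) : Set (Fin n → ℝ) :=
  ⋃ m ∈ {m : Fin n → ℕ | (∀ i, m i < 2 ^ N) ∧
    ∫ x in hCube N m, f x ≤ lam * ((2 ^ N : ℝ)⁻¹) ^ n}, hCube N m

lemma Uset_meas {n : ℕ} (f : (Fin n → ℝ) → ℝ) (lam : ℝ) (N : ℕ) : MeasurableSet (Uset f lam N) :=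
  MeasurableSet.biUnion (Set.to_countable _) (fun m _ => hCube_meas N m)

lemma Uset_ae {n : ℕ} {f : (Fin n → ℝ) → ℝ} (hf : IntegrableOn f (Q0 n)) (lam : ℝ) :
    ∀ᵐ x ∂(volume : Measure (Fin n → ℝ)), x ∈ Q0 n → lam < f x → ∀ᶠ N in atTop, x ∉ Uset f lam N := by
  have hQm : MeasurableSet (Q0 n) := measurableSet_Icc
  have hloc : LocallyIntegrable ((Q0 n).indicator f) volume :=
    ((integrable_indicator_iff hQm).2 hf).locallyIntegrable
  filter_upwards [IsUnifLocDoublingMeasure.ae_tendsto_average volume hloc 1] with x hx hxQ hlt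
  by_contra hcon
  rw [not_eventually] at hcon
  simp only [not_not] at hcon
  have hne : NeBot (atTop ⊓ 𝓟 {N | x ∈ Uset f lam N}) := by
    rw [← frequently_mem_iff_neBot]; exact hcon
  have hm : ∀ N, ∃ m : Fin n → ℕ, x ∈ Uset f lam N → ((∀ i, m i < 2 ^ N) ∧
    ∫ x in hCube N m, f x ≤ lam * ((2 ^ N : ℝ)⁻¹) ^ n) ∧ x ∈ hCube N m := by
    intro N
    by_cases h : x ∈ Uset f lam N
    · have h' := h
      unfold Uset at h'
      simp only [mem_iUnion] at h'
      obtain ⟨m, hm, hxm⟩ := h'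
      exact ⟨m, fun _ => ⟨hm, hxm⟩⟩
    · exact ⟨0, fun h' => absurd h' h⟩
  choose m hm using hm
  have hδ : Tendsto (fun k : ℕ => ((2 ^ k : ℝ)⁻¹ / 2)) (atTop ⊓ 𝓟 {N | x ∈ Uset f lam N}) (𝓝[>] 0) := by
    apply Tendsto.mono_left _ inf_le_left
    rw [tendsto_nhdsWithin_iff]
    constructor
    · have : Tendsto (fun k : ℕ => ((1/2 : ℝ) ^ k) / 2) atTop (𝓝 (0 / 2)) :=
        (tendsto_pow_atTop_nhds_zero_of_lt_one (by norm_num) (by norm_num)).div_const 2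
      simpa using this
    · exact Eventually.of_forall (fun k => by simp only [mem_Ioi]; positivity)
  have hev : ∀ᶠ N in (atTop ⊓ 𝓟 {N | x ∈ Uset f lam N}), x ∈ Uset f lam N :=
    mem_inf_of_right (mem_principal_self _)
  have ht := hx (fun N i => ((m N i : ℝ) + 1 / 2) / 2 ^ N) _ hδ (by
    filter_upwards [hev] with N hN
    rw [one_mul, ← cCube_ball]
    exact hCube_sub_c _ _ (hm N hN).2)
  rw [indicator_of_mem hxQ] at ht
  have : f x ≤ lam := by
    apply le_of_tendsto ht
    filter_upwards [hev] with N hN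
    rw [← cCube_ball, setAverage_eq, Measure.real, cCube_vol, ← setIntegral_congr_set (hCube_ae N _),
      smul_eq_mul, inv_mul_le_iff₀ (by positivity)]
    have h1 : ∫ x in hCube N (m N), (Q0 n).indicator f x = ∫ x in hCube N (m N), f x := by
      apply setIntegral_congr_fun (hCube_meas _ _)
      intro y hy
      exact indicator_of_mem (hCube_sub _ _ (hm N hN).1.1 hy) _
    rw [h1]
    linarith [(hm N hN).1.2]
  linarith

lemma Q0_hCube (n : ℕ) : hCube 0 (0 : Fin n → ℕ) =ᵐ[volume] Q0 n := by
  have h := hCube_ae 0 (0 : Fin n → ℕ)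
  have h2 : cCube 0 (0 : Fin n → ℕ) = Q0 n := by
    unfold cCube Q0
    congr 1 <;> funext i <;> simp
  rwa [h2] at h

lemma Q0_ineq {n : ℕ} {f : (Fin n → ℝ) → ℝ} {ε : ℝ} (hf : GRcond f ε) (hε : 0 ≤ ε)
    (s lam : ℝ) (hl0 : 0 ≤ lam) (hs : s ≤ lam) (hl : ∫ x in Q0 n, f x ≤ lam) :
    (lam - s) * ∫ x in Q0 n, max (f x - lam) 0 ≤
      (2 ^ n * (ε / 2) * lam) * ∫ x in Q0 n, max (f x - s) 0 := by
  have hQ : IsFiniteMeasure (volume.restrict (Q0 n)) := by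
    constructor
    rw [Measure.restrict_apply_univ]
    exact isCompact_Icc.measure_lt_top
  have hil : IntegrableOn (fun x => max (f x - lam) 0) (Q0 n) :=
    Integrable.pos_part (hf.1.sub (integrable_const lam))
  have hlim : Tendsto (fun N => ∫ x in Q0 n, (Uset f lam N).indicator (fun x => max (f x - lam) 0) x)
      atTop (𝓝 (∫ x in Q0 n, (0:ℝ))) := by
    apply tendsto_integral_of_dominated_convergence (fun x => max (f x - lam) 0)
    · intro N
      exact (hil.indicator (Uset_meas f lam N)).aestronglyMeasurable
    · exact hil
    · intro N
      refine Eventually.of_forall (fun x => ?_)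
      rw [Real.norm_of_nonneg (indicator_nonneg (fun x _ => le_max_right _ _) x)]
      exact indicator_le_self' (fun x _ => le_max_right _ _) x
    · rw [ae_restrict_iff' (Q0_meas n)]
      filter_upwards [Uset_ae hf.1 lam] with x hx hxQ
      apply tendsto_const_nhds.congr'
      by_cases h : lam < f x
      · filter_upwards [hx hxQ h] with N hN
        rw [indicator_of_notMem hN]
      · refine Eventually.of_forall (fun N => ?_)
        have h0 : max (f x - lam) 0 = 0 := max_eq_right (by linarith)
        show (0:ℝ) = (Uset f lam N).indicator (fun x => max (f x - lam) 0) x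
        by_cases hN : x ∈ Uset f lam N
        · rw [indicator_of_mem hN, h0]
        · rw [indicator_of_notMem hN]
  rw [integral_zero] at hlim
  have hlim2 := (hlim.const_mul (lam - s)).const_add ((2 ^ n * (ε / 2) * lam) * ∫ x in Q0 n, max (f x - s) 0)
  rw [mul_zero, add_zero] at hlim2
  apply ge_of_tendsto' hlim2
  intro N
  have := main_ineq hf hε s lam hl0 hs (Uset f lam) (Uset_meas f lam)
    (fun N m hm h => subset_biUnion_of_mem (u := fun m => hCube N m) (show m ∈ {m : Fin n → ℕ | (∀ i, m i < 2 ^ N) ∧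
      ∫ x in hCube N m, f x ≤ lam * ((2 ^ N : ℝ)⁻¹) ^ n} from ⟨hm, h⟩)) N 0 0 (by simp)
      (by rw [setIntegral_congr_set (Q0_hCube n)]; simpa using hl)
  rw [setIntegral_congr_set (Q0_hCube n), setIntegral_congr_set (Q0_hCube n),
    setIntegral_congr_set (Q0_hCube n), zero_add] at this
  exact this

lemma nnp {α : Type*} [MeasurableSpace α] (μ : Measure α) (g : α → ℝ) (c : ℝ) :
    0 ≤ᵐ[μ] fun x => max (g x - c) 0 := Eventually.of_forall fun _ => le_max_right _ _

lemma rearr_lintegral {n : ℕ} {f : (Fin n → ℝ) → ℝ} {g : ℝ → ℝ}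
    (hfi : IntegrableOn f (Q0 n)) (h0 : ∀ x ∈ Q0 n, 0 ≤ f x)
    (hg : IsRearrangement (fun x => |f x|) g) (c : ℝ) :
    ∫⁻ u in Ioc (0:ℝ) 1, ENNReal.ofReal (max (g u - c) 0) =
    ∫⁻ x in Q0 n, ENNReal.ofReal (max (f x - c) 0) := by
  have hgm : AEMeasurable g (volume.restrict (Ioc 0 1)) :=
    aemeasurable_restrict_of_antitoneOn measurableSet_Ioc hg.1
  have hfm : AEMeasurable f (volume.restrict (Q0 n)) := hfi.aestronglyMeasurable.aemeasurable
  rw [lintegral_eq_lintegral_meas_lt _ (nnp _ g c)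
    ((hgm.sub_const c).max aemeasurable_const),
    lintegral_eq_lintegral_meas_lt _ (nnp _ f c)
    ((hfm.sub_const c).max aemeasurable_const)]
  apply setLIntegral_congr_fun measurableSet_Ioi
  intro τ hτ
  have hτ' : (0:ℝ) < τ := hτ
  have e : ∀ y : ℝ, τ < max (y - c) 0 ↔ c + τ < y := by
    intro y; rw [lt_max_iff]; constructor
    · rintro (h | h) <;> linarith
    · intro h; left; linarith
  simp only [e]
  rw [Measure.restrict_apply' measurableSet_Ioc, Measure.restrict_apply' (Q0_meas n)]
  have := hg.2.2 (c + τ)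
  have e1 : {a | c + τ < g a} ∩ Ioc 0 1 = {t ∈ Ioc (0:ℝ) 1 | c + τ < g t} := by
    ext a; simp only [mem_inter_iff, mem_setOf_eq]; tauto
  have e2 : {a | c + τ < f a} ∩ Q0 n = {x ∈ Q0 n | c + τ < |f x|} := by
    ext a; simp only [mem_inter_iff, mem_setOf_eq]
    constructor
    · rintro ⟨h, h'⟩; exact ⟨h', by rwa [abs_of_nonneg (h0 a h')]⟩
    · rintro ⟨h, h'⟩; exact ⟨by rwa [abs_of_nonneg (h0 a h)] at h', h⟩
  rw [e1, e2, this]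

lemma rearr_integral {n : ℕ} {f : (Fin n → ℝ) → ℝ} {g : ℝ → ℝ}
    (hfi : IntegrableOn f (Q0 n)) (h0 : ∀ x ∈ Q0 n, 0 ≤ f x)
    (hg : IsRearrangement (fun x => |f x|) g) (c : ℝ) :
    IntegrableOn (fun u => max (g u - c) 0) (Ioc (0:ℝ) 1) ∧
    ∫ u in Ioc (0:ℝ) 1, max (g u - c) 0 = ∫ x in Q0 n, max (f x - c) 0 := by
  have hQ : IsFiniteMeasure (volume.restrict (Q0 n)) := by
    constructor
    rw [Measure.restrict_apply_univ]
    exact isCompact_Icc.measure_lt_top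
  have hgm : AEMeasurable g (volume.restrict (Ioc 0 1)) :=
    aemeasurable_restrict_of_antitoneOn measurableSet_Ioc hg.1
  have hil : IntegrableOn (fun x => max (f x - c) 0) (Q0 n) :=
    Integrable.pos_part (hfi.sub (integrable_const c))
  have hgm' : AEStronglyMeasurable (fun u => max (g u - c) 0) (volume.restrict (Ioc (0:ℝ) 1)) :=
    ((hgm.sub_const c).max aemeasurable_const).aestronglyMeasurable
  have hl := rearr_lintegral hfi h0 hg c
  constructor
  · refine ⟨hgm', ?_⟩
    rw [hasFiniteIntegral_iff_ofReal (nnp _ g c), hl]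
    rw [← hasFiniteIntegral_iff_ofReal (nnp _ f c)]
    exact hil.2
  · rw [integral_eq_lintegral_of_nonneg_ae (nnp _ g c) hgm', hl,
      integral_eq_lintegral_of_nonneg_ae (nnp _ f c) hil.1]

lemma core_step {n : ℕ} {f : (Fin n → ℝ) → ℝ} {ε : ℝ} (hf : GRcond f ε) (hε : 0 ≤ ε) {g : ℝ → ℝ}
    (hg : IsRearrangement (fun x => |f x|) g) (t τ : ℝ) (ht : t ∈ Ioc (0:ℝ) 1) (hτ0 : 0 < τ) (hτ : τ ≤ t) :
    τ * (hardyAvg g τ - hardyAvg g t) ≤ 2 ^ n * (ε / 2) * hardyAvg g t * t := by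
  set lam := hardyAvg g t with hlam
  set s := g t with hsd
  have hR := rearr_integral hf.1 hf.2.1 hg
  have hI : IntegrableOn g (Ioc 0 1) := by
    have h1 := (hR (g 1)).1.add (integrable_const (g 1))
    apply h1.congr
    rw [EventuallyEq, ae_restrict_iff' measurableSet_Ioc]
    refine Eventually.of_forall (fun u hu => ?_)
    have : g 1 ≤ g u := hg.1 hu (right_mem_Ioc.2 one_pos) hu.2
    show max (g u - g 1) 0 + g 1 = g u
    rw [max_eq_left (by linarith)]; ring
  have hsub : ∀ r, r ≤ 1 → Ioc (0:ℝ) r ⊆ Ioc 0 1 := fun r hr => Ioc_subset_Ioc_right hr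
  have hc : ∀ r, 0 < r → r ≤ 1 → ∀ c, ∫ u in Ioc (0:ℝ) r, (g u - c) = r * (hardyAvg g r - c) := by
    intro r hr hr1 c
    rw [integral_sub (hI.mono_set (hsub r hr1)) (integrable_const c)]
    simp only [integral_const, smul_eq_mul, measureReal_restrict_apply_univ, hardyAvg,
      Real.volume_real_Ioc_of_le hr.le]
    field_simp
    ring
  have hst : ∫ x in Q0 n, max (f x - s) 0 = t * (lam - s) := by
    rw [← (hR s).2, ← hc t ht.1 ht.2 s]
    have h1 : ∫ u in Ioc (0:ℝ) t, (g u - s) = ∫ u in Ioc (0:ℝ) t, max (g u - s) 0 := by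
      apply setIntegral_congr_fun measurableSet_Ioc
      intro u hu
      have : s ≤ g u := hg.1 (hsub t ht.2 hu) ht hu.2
      exact (max_eq_left (by linarith)).symm
    rw [h1]
    apply setIntegral_eq_of_subset_of_forall_sdiff_eq_zero measurableSet_Ioc (hsub t ht.2)
    intro u hu
    have : t ≤ u := by
      by_contra h
      exact hu.2 ⟨hu.1.1, by linarith⟩
    have : g u ≤ s := hg.1 ht hu.1 this
    exact max_eq_right (by linarith)
  have hs : s ≤ lam := by
    have : 0 ≤ t * (lam - s) := by
      rw [← hst]; exact integral_nonneg (fun x => le_max_right _ _)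
    have := nonneg_of_mul_nonneg_right this ht.1
    linarith
  have hQ : IsFiniteMeasure (volume.restrict (Q0 n)) := by
    constructor
    rw [Measure.restrict_apply_univ]
    exact isCompact_Icc.measure_lt_top
  have hQv : volume.real (Q0 n) = 1 := by
    rw [Measure.real, ← measure_congr (Q0_hCube n)]
    have := hCube_vol 0 (0 : Fin n → ℕ)
    rw [Measure.real] at this
    simpa using this
  have hfl : ∫ x in Q0 n, f x ≤ lam := by
    have h1 : ∫ x in Q0 n, (f x - s) ≤ ∫ x in Q0 n, max (f x - s) 0 := by
      apply integral_mono
      · exact hf.1.sub (integrable_const s)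
      · exact Integrable.pos_part (hf.1.sub (integrable_const s))
      · intro x; exact le_max_left _ _
    rw [integral_sub hf.1 (integrable_const s), hst] at h1
    simp only [integral_const, smul_eq_mul, measureReal_restrict_apply_univ, hQv] at h1
    nlinarith [ht.2]
  have hl0 : 0 ≤ lam := le_trans (setIntegral_nonneg measurableSet_Icc hf.2.1) hfl
  have hup : τ * (hardyAvg g τ - lam) ≤ ∫ x in Q0 n, max (f x - lam) 0 := by
    rw [← hc τ hτ0 (hτ.trans ht.2), ← (hR lam).2]
    calc _ ≤ ∫ u in Ioc (0:ℝ) τ, max (g u - lam) 0 := by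
          apply integral_mono
          · exact (hI.mono_set (hsub τ (hτ.trans ht.2))).sub (integrable_const lam)
          · exact (hR lam).1.mono_set (hsub τ (hτ.trans ht.2))
          · intro x; exact le_max_left _ _
      _ ≤ _ := by
          apply setIntegral_mono_set (hR lam).1
          · exact Eventually.of_forall (fun x => le_max_right _ _)
          · exact (hsub τ (hτ.trans ht.2)).eventuallyLE
  refine hup.trans ?_
  rcases hs.eq_or_lt with h | h
  · rw [← h, hst, ← h, h]
    have := ht.1
    have : 0 ≤ 2 ^ n * (ε / 2) * lam * t := by positivity
    linarith
  · have := Q0_ineq hf hε s lam hl0 hs hfl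
    rw [hst] at this
    have h' : 0 < lam - s := by linarith
    apply le_of_mul_le_mul_left _ h'
    linarith

/-- If `f ∈ GR_𝒟(Q₀,ε)` with `ε ∈ (0, 1/2ⁿ⁻¹)`, `p > 1` satisfies
`pᵖ/(p−1)^{p−1} = 1/(2ⁿ⁻¹ε)` and `γ = (p/(p−1))ᵖ`, then `γ > 1` and
`f**(t/γ) ≤ γ^{1/p} f**(t)` for every `t ∈ (0,1]`. -/
theorem GR_iteration_step (n : ℕ) (hn : 1 ≤ n)
    (ε : ℝ) (hε : ε ∈ Set.Ioo 0 (1 / 2 ^ (n - 1)))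
    (f : (Fin n → ℝ) → ℝ) (hf : GRcond f ε)
    (p : ℝ) (hp : 1 < p)
    (hpeq : p ^ p / (p - 1) ^ (p - 1) = 1 / (2 ^ (n - 1) * ε))
    (fstar : ℝ → ℝ) (hfs : IsRearrangement (fun x => |f x|) fstar)
    (γ : ℝ) (hγ : γ = (p / (p - 1)) ^ p) :
    1 < γ ∧ ∀ t ∈ Set.Ioc (0:ℝ) 1,
      hardyAvg fstar (t / γ) ≤ γ ^ p⁻¹ * hardyAvg fstar t := by
  have hp1 : 0 < p - 1 := by linarith
  have hp0 : 0 < p := by linarith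
  have hb : 1 < p / (p - 1) := by rw [one_lt_div hp1]; linarith
  have hγ1 : 1 < γ := by rw [hγ]; exact Real.one_lt_rpow hb hp0
  refine ⟨hγ1, fun t ht => ?_⟩
  have hγ0 : 0 < γ := by linarith
  have hroot : γ ^ p⁻¹ = p / (p - 1) := by
    rw [hγ]; exact Real.rpow_rpow_inv (by positivity) hp0.ne'
  have hε0 := hε.1
  have hγE : γ * (2 ^ (n - 1) * ε) = 1 / (p - 1) := by
    have h1 : 0 < p ^ p := Real.rpow_pos_of_pos hp0 p
    have h2 : 0 < (p - 1) ^ (p - 1) := Real.rpow_pos_of_pos hp1 _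
    have h3 : (p - 1) ^ p = (p - 1) ^ (p - 1) * (p - 1) := by
      rw [← Real.rpow_add_one hp1.ne']; ring_nf
    have h4 : 2 ^ (n - 1) * ε = (p - 1) ^ (p - 1) / p ^ p := by
      rw [← inv_div, hpeq, one_div, inv_inv]
    rw [h4, hγ, Real.div_rpow hp0.le hp1.le, h3]
    field_simp
  have hpow : (2:ℝ) ^ n = 2 * 2 ^ (n - 1) := by
    rw [← pow_succ', Nat.sub_add_cancel hn]
  have hcore := core_step hf hε0.le hfs t (t / γ) ht (div_pos ht.1 hγ0)
    (div_le_self ht.1.le hγ1.le)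
  rw [hroot]
  have ht0 := ht.1
  set a := hardyAvg fstar t
  set b := hardyAvg fstar (t / γ)
  have h5 : b - a ≤ (γ * (2 ^ (n - 1) * ε)) * a := by
    rw [hpow, div_mul_eq_mul_div, div_le_iff₀ hγ0] at hcore
    apply le_of_mul_le_mul_left _ ht0
    linarith
  rw [hγE] at h5
  have h6 : p / (p - 1) = 1 + 1 / (p - 1) := by field_simp; ring
  rw [h6]
  linarith
end
end

section
/- Let f ∈ GR_D(Q0,ε) for some ε ∈ (0,2). Then for every t ∈ (0,1], (1/t)∫_0^t |f^*(u) − f^{**}(t)| du ≤ 2^n ε f^{**}(t). -/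
open MeasureTheory Set Real

noncomputable section

lemma volQ0 (n : ℕ) : volume (Q0 n) = 1 := by
  unfold Q0
  rw [Real.volume_Icc_pi]; simp

lemma ident_aux {n : ℕ} {f : (Fin n → ℝ) → ℝ} (hfi : IntegrableOn f (Q0 n))
    (hf0 : ∀ x ∈ Q0 n, 0 ≤ f x) {g : ℝ → ℝ} (hfs : IsRearrangement (fun x => |f x|) g) :
    ProbabilityTheory.IdentDistrib f g (volume.restrict (Q0 n))
      (volume.restrict (Ioc (0:ℝ) 1)) := by
  have hQm : MeasurableSet (Q0 n) := measurableSet_Icc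
  have hg : AEMeasurable g (volume.restrict (Ioc (0:ℝ) 1)) :=
    aemeasurable_restrict_of_antitoneOn measurableSet_Ioc hfs.1
  have hfm : AEMeasurable f (volume.restrict (Q0 n)) := hfi.aemeasurable
  have : IsProbabilityMeasure (volume.restrict (Q0 n)) := ⟨by simp [volQ0]⟩
  have : IsProbabilityMeasure (volume.restrict (Ioc (0:ℝ) 1)) := ⟨by simp⟩
  refine ⟨hfm, hg, ?_⟩
  have := Measure.isProbabilityMeasure_map hfm
  have := Measure.isProbabilityMeasure_map hg
  refine Measure.ext_of_Iic _ _ fun a => ?_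
  rw [← compl_Ioi, prob_compl_eq_one_sub measurableSet_Ioi,
    prob_compl_eq_one_sub measurableSet_Ioi]
  congr 1
  rw [Measure.map_apply_of_aemeasurable hfm measurableSet_Ioi,
    Measure.map_apply_of_aemeasurable hg measurableSet_Ioi,
    Measure.restrict_apply' hQm, Measure.restrict_apply' measurableSet_Ioc]
  have h := hfs.2.2 a
  have e1 : g ⁻¹' Ioi a ∩ Ioc (0:ℝ) 1 = {t ∈ Set.Ioc (0:ℝ) 1 | a < g t} := by
    ext x; simp only [mem_inter_iff, mem_preimage, mem_Ioi, mem_ofPred_eq]; tauto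
  have e2 : f ⁻¹' Ioi a ∩ Q0 n = {x ∈ Q0 n | a < |f x|} := by
    ext x; simp only [mem_inter_iff, mem_preimage, mem_Ioi, mem_ofPred_eq]
    constructor
    · rintro ⟨h1, h2⟩; exact ⟨h2, by rwa [abs_of_nonneg (hf0 x h2)]⟩
    · rintro ⟨h1, h2⟩; exact ⟨by rwa [abs_of_nonneg (hf0 x h1)] at h2, h1⟩
  rw [e1, e2, h]

lemma int_pos_eq {n : ℕ} {f : (Fin n → ℝ) → ℝ} (hfi : IntegrableOn f (Q0 n))
    (hf0 : ∀ x ∈ Q0 n, 0 ≤ f x) {g : ℝ → ℝ} (hfs : IsRearrangement (fun x => |f x|) g) (b : ℝ) :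
    ∫ x in Q0 n, max (f x - b) 0 = ∫ u in Ioc (0:ℝ) 1, max (g u - b) 0 := by
  have h := (ident_aux hfi hf0 hfs).comp (u := fun y : ℝ => max (y - b) 0) (by fun_prop)
  exact h.integral_eq

lemma g_int {n : ℕ} {f : (Fin n → ℝ) → ℝ} (hfi : IntegrableOn f (Q0 n))
    (hf0 : ∀ x ∈ Q0 n, 0 ≤ f x) {g : ℝ → ℝ} (hfs : IsRearrangement (fun x => |f x|) g) :
    IntegrableOn g (Ioc (0:ℝ) 1) :=
  (ident_aux hfi hf0 hfs).integrable_iff.1 hfi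

lemma fin_Q0 (n : ℕ) : IsFiniteMeasure (volume.restrict (Q0 n)) := ⟨by simp [volQ0]⟩

lemma int_max {n : ℕ} {f : (Fin n → ℝ) → ℝ} (hfi : IntegrableOn f (Q0 n)) (b : ℝ) :
    IntegrableOn (fun x => max (f x - b) 0) (Q0 n) := by
  have := fin_Q0 n
  exact (hfi.sub (integrable_const b)).pos_part

lemma R_aux {n : ℕ} {f : (Fin n → ℝ) → ℝ} (hfi : IntegrableOn f (Q0 n))
    (hf0 : ∀ x ∈ Q0 n, 0 ≤ f x) {g : ℝ → ℝ} (hfs : IsRearrangement (fun x => |f x|) g)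
    {t : ℝ} (ht : t ∈ Ioc (0:ℝ) 1) {E : Set (Fin n → ℝ)} (hE : E ⊆ Q0 n) :
    ∫ x in E, (f x - g t) ≤ t * (hardyAvg g t - g t) := by
  have := fin_Q0 n
  have hgi := g_int hfi hf0 hfs
  have hm := int_max hfi (g t)
  have h1 : ∫ x in E, (f x - g t) ≤ ∫ x in E, max (f x - g t) 0 := by
    apply integral_mono
    · exact IntegrableOn.mono_set (hfi.sub (integrable_const (g t))) hE
    · exact hm.mono_set hE
    · intro x; exact le_max_left _ _
  have h2 : ∫ x in E, max (f x - g t) 0 ≤ ∫ x in Q0 n, max (f x - g t) 0 :=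
    setIntegral_mono_set hm (Filter.Eventually.of_forall fun x => le_max_right _ _)
      (Filter.Eventually.of_forall hE)
  have hgm : IntegrableOn (fun u => max (g u - g t) 0) (Ioc (0:ℝ) 1) :=
    (hgi.sub (integrable_const (g t))).pos_part
  have hu : Ioc (0:ℝ) 1 = Ioc 0 t ∪ Ioc t 1 := (Ioc_union_Ioc_eq_Ioc ht.1.le ht.2).symm
  have h3 : ∫ u in Ioc (0:ℝ) 1, max (g u - g t) 0 = ∫ u in Ioc (0:ℝ) t, (g u - g t) := by
    have hs1 : Ioc (0:ℝ) t ⊆ Ioc 0 1 := Ioc_subset_Ioc_right ht.2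
    have hs2 : Ioc (t:ℝ) 1 ⊆ Ioc 0 1 := Ioc_subset_Ioc_left ht.1.le
    rw [hu, setIntegral_union _ measurableSet_Ioc (hgm.mono_set hs1) (hgm.mono_set hs2)]
    · have e2 : ∫ u in Ioc (t:ℝ) 1, max (g u - g t) 0 = 0 := by
        apply setIntegral_eq_zero_of_forall_eq_zero
        intro u hu
        have := hfs.1 ht (hs2 hu) hu.1.le
        exact max_eq_right (by linarith)
      rw [e2, add_zero]
      apply setIntegral_congr_fun measurableSet_Ioc
      intro u hu
      have := hfs.1 (hs1 hu) ht hu.2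
      exact max_eq_left (by linarith)
    · exact Set.disjoint_left.2 fun x hx hy => absurd hx.2 (not_le.2 hy.1)
  have h4 : ∫ u in Ioc (0:ℝ) t, (g u - g t) = t * (hardyAvg g t - g t) := by
    rw [integral_sub (hgi.mono_set (Ioc_subset_Ioc_right ht.2)) (integrable_const _)]
    have := ht.1.ne'
    simp [hardyAvg, ht.1.le]
    field_simp
  rw [← h4, ← h3, ← int_pos_eq hfi hf0 hfs]
  exact h1.trans h2

lemma g_le {n : ℕ} {f : (Fin n → ℝ) → ℝ} (hfi : IntegrableOn f (Q0 n))
    (hf0 : ∀ x ∈ Q0 n, 0 ≤ f x) {g : ℝ → ℝ} (hfs : IsRearrangement (fun x => |f x|) g)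
    {t : ℝ} (ht : t ∈ Ioc (0:ℝ) 1) : g t ≤ hardyAvg g t := by
  have := R_aux hfi hf0 hfs ht (empty_subset _)
  simp at this
  have h2 := ht.1
  by_contra! h
  nlinarith

lemma lhs_le {n : ℕ} {f : (Fin n → ℝ) → ℝ} (hfi : IntegrableOn f (Q0 n))
    (hf0 : ∀ x ∈ Q0 n, 0 ≤ f x) {g : ℝ → ℝ} (hfs : IsRearrangement (fun x => |f x|) g)
    {t : ℝ} (ht : t ∈ Ioc (0:ℝ) 1) :
    ∫ u in Ioc (0:ℝ) t, |g u - hardyAvg g t| ≤ 2 * ∫ x in Q0 n, max (f x - hardyAvg g t) 0 := by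
  have hgi := g_int hfi hf0 hfs
  have hs1 : Ioc (0:ℝ) t ⊆ Ioc 0 1 := Ioc_subset_Ioc_right ht.2
  set a := hardyAvg g t with ha
  have hi : IntegrableOn (fun u => g u - a) (Ioc (0:ℝ) 1) := hgi.sub (integrable_const a)
  have hgm : IntegrableOn (fun u => max (g u - a) 0) (Ioc (0:ℝ) 1) := hi.pos_part
  have h0 : ∫ u in Ioc (0:ℝ) t, (g u - a) = 0 := by
    rw [integral_sub (hgi.mono_set hs1) (integrable_const _)]
    have := ht.1.ne'
    simp [ha, hardyAvg, ht.1.le]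
    field_simp; simp
  have h1 : ∫ u in Ioc (0:ℝ) t, |g u - a| = 2 * ∫ u in Ioc (0:ℝ) t, max (g u - a) 0 := by
    have : ∀ u, |g u - a| = 2 * max (g u - a) 0 - (g u - a) := by
      intro u
      rcases le_total 0 (g u - a) with h | h
      · rw [abs_of_nonneg h, max_eq_left h]; ring
      · rw [abs_of_nonpos h, max_eq_right h]; ring
    simp_rw [this]
    rw [integral_sub ((hgm.mono_set hs1).const_mul 2) (hi.mono_set hs1), h0, integral_const_mul,
      sub_zero]
  rw [h1, int_pos_eq hfi hf0 hfs]
  refine mul_le_mul_of_nonneg_left ?_ (by norm_num)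
  exact setIntegral_mono_set hgm (Filter.Eventually.of_forall fun x => le_max_right _ _)
      (Filter.Eventually.of_forall hs1)

/-- half-open cube -/
def Cb {n : ℕ} (k : ℕ) (m : Fin n → ℕ) : Set (Fin n → ℝ) :=
  Set.pi univ fun i => Ico ((m i : ℝ) / 2 ^ k) (((m i : ℝ) + 1) / 2 ^ k)

/-- closed cube -/
def Db {n : ℕ} (k : ℕ) (m : Fin n → ℕ) : Set (Fin n → ℝ) :=
  Set.Icc (fun i => (m i : ℝ) / 2 ^ k) (fun i => ((m i : ℝ) + 1) / 2 ^ k)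

def idx {n : ℕ} (k : ℕ) (x : Fin n → ℝ) : Fin n → ℕ := fun i => ⌊x i * 2 ^ k⌋₊

lemma Cb_ae {n : ℕ} (k : ℕ) (m : Fin n → ℕ) : (Cb k m : Set (Fin n → ℝ)) =ᵐ[volume] Db k m :=
  Measure.univ_pi_Ico_ae_eq_Icc

lemma Cb_meas {n : ℕ} (k : ℕ) (m : Fin n → ℕ) : MeasurableSet (Cb k m) :=
  MeasurableSet.univ_pi fun _ => measurableSet_Ico

lemma Cb_vol {n : ℕ} (k : ℕ) (m : Fin n → ℕ) :
    (volume (Cb k m)).toReal = ((2:ℝ) ^ k)⁻¹ ^ n := by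
  unfold Cb
  rw [Real.volume_pi_Ico_toReal]
  · simp [← sub_div]
  · intro i; simp only; gcongr; linarith

lemma Db_vol {n : ℕ} (k : ℕ) (m : Fin n → ℕ) :
    (volume (Db k m)).toReal = ((2:ℝ) ^ k)⁻¹ ^ n := by
  rw [← measure_congr (Cb_ae k m), Cb_vol]

lemma mem_Cb {n : ℕ} {k : ℕ} {m : Fin n → ℕ} {x : Fin n → ℝ} :
    x ∈ Cb k m ↔ (∀ i, 0 ≤ x i) ∧ idx k x = m := by
  have h2 : (0:ℝ) < 2 ^ k := by positivity
  simp only [Cb, mem_pi, mem_univ, true_implies, mem_Ico, funext_iff, idx]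
  rw [← forall_and]
  refine forall_congr' fun i => ?_
  rw [div_le_iff₀ h2, lt_div_iff₀ h2]
  constructor
  · rintro ⟨h, h'⟩
    have h0 : 0 ≤ x i * 2 ^ k := le_trans (by positivity) h
    exact ⟨nonneg_of_mul_nonneg_left h0 h2, (Nat.floor_eq_iff h0).2 ⟨h, h'⟩⟩
  · rintro ⟨h, h'⟩
    exact (Nat.floor_eq_iff (by positivity)).1 h'

lemma idx_div {n : ℕ} {j k : ℕ} (h : j ≤ k) (x : Fin n → ℝ) (i : Fin n) :
    idx j x i = idx k x i / 2 ^ (k - j) := by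
  unfold idx
  rw [← Nat.floor_div_natCast]
  congr 1
  obtain ⟨d, rfl⟩ := Nat.exists_eq_add_of_le h
  push_cast
  rw [Nat.add_sub_cancel_left, pow_add]
  field_simp

lemma idx_congr {n : ℕ} {j k : ℕ} (h : j ≤ k) {x y : Fin n → ℝ} (e : idx k x = idx k y) :
    idx j x = idx j y := by
  funext i; rw [idx_div h, idx_div h, e]

lemma Cb_sub {n : ℕ} {k : ℕ} {m m' : Fin n → ℕ} (h : ∀ i, m' i / 2 = m i) :
    Cb (k + 1) m' ⊆ (Cb k m : Set (Fin n → ℝ)) := by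
  intro x hx
  rw [mem_Cb] at hx ⊢
  refine ⟨hx.1, ?_⟩
  funext i
  rw [idx_div (Nat.le_succ k), hx.2, ← h i]; simp

lemma mem_C0 {n : ℕ} {x : Fin n → ℝ} : x ∈ Cb 0 (0 : Fin n → ℕ) ↔ ∀ i, 0 ≤ x i ∧ x i < 1 := by
  simp [Cb]

lemma C0_sub {n : ℕ} : Cb 0 (0 : Fin n → ℕ) ⊆ Q0 n := by
  intro x hx
  rw [mem_C0] at hx
  exact ⟨fun i => (hx i).1, fun i => (hx i).2.le⟩

lemma C0_ae {n : ℕ} : Cb 0 (0 : Fin n → ℕ) =ᵐ[volume] Q0 n := by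
  have e : Q0 n = Db 0 (0 : Fin n → ℕ) := by
    unfold Q0 Db; congr 1 <;> ext i <;> simp
  rw [e]
  exact Cb_ae (n := n) 0 0

lemma idx_lt {n : ℕ} {k : ℕ} {x : Fin n → ℝ} (hx : x ∈ Cb 0 (0 : Fin n → ℕ)) (i : Fin n) :
    idx k x i < 2 ^ k := by
  rw [mem_C0] at hx
  unfold idx
  rw [Nat.floor_lt (mul_nonneg (hx i).1 (by positivity))]
  push_cast
  nlinarith [(hx i).2, pow_pos (two_pos (α := ℝ)) k]

lemma Cb_sub_C0 {n : ℕ} {k : ℕ} {x : Fin n → ℝ} (hx : x ∈ Cb 0 (0 : Fin n → ℕ)) :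
    Cb k (idx k x) ⊆ Cb 0 (0 : Fin n → ℕ) := by
  intro y hy
  rw [mem_Cb] at hy hx ⊢
  exact ⟨hy.1, by rw [idx_congr (Nat.zero_le k) hy.2, hx.2]⟩

lemma Db_sub {n : ℕ} {k : ℕ} {m : Fin n → ℕ} (hm : ∀ i, m i < 2 ^ k) : Db k m ⊆ Q0 n := by
  intro x hx
  refine ⟨fun i => le_trans (by simp; positivity) (hx.1 i), fun i => (hx.2 i).trans ?_⟩
  simp only [Pi.one_apply]
  rw [div_le_one (by positivity)]
  exact_mod_cast hm i

lemma Db_ball {n : ℕ} {k : ℕ} {m : Fin n → ℕ} :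
    Db k m = Metric.closedBall (fun i => ((m i : ℝ) + 1 / 2) / 2 ^ k) (1 / 2 / 2 ^ k) := by
  rw [closedBall_pi _ (by positivity)]
  unfold Db
  rw [← Set.pi_univ_Icc]
  congr 1; funext i
  rw [Real.closedBall_eq_Icc]
  congr 1 <;> ring

lemma diff_aux {n : ℕ} {f : (Fin n → ℝ) → ℝ} (hfi : IntegrableOn f (Q0 n)) {a : ℝ} :
    ∀ᵐ x ∂(volume : Measure (Fin n → ℝ)), x ∈ Cb 0 (0 : Fin n → ℕ) →
      (∀ k, ∫ y in Cb k (idx k x), f y ≤ a * (volume (Cb k (idx k x))).toReal) → f x ≤ a := by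
  have hQm : MeasurableSet (Q0 n) := measurableSet_Icc
  have hF : Integrable ((Q0 n).indicator f) := hfi.integrable_indicator hQm
  filter_upwards [IsUnifLocDoublingMeasure.ae_tendsto_average volume hF.locallyIntegrable 1]
    with x hx hx0 hk
  have ht := hx (ι := ℕ) (l := Filter.atTop)
    (fun k i => ((idx k x i : ℝ) + 1 / 2) / 2 ^ k) (fun k => 1 / 2 / 2 ^ k) ?_ ?_
  · rw [indicator_of_mem (C0_sub hx0)] at ht
    refine le_of_tendsto' ht fun k => ?_
    rw [← Db_ball, setAverage_eq, smul_eq_mul]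
    have h1 : ∫ y in Db k (idx k x), (Q0 n).indicator f y = ∫ y in Cb k (idx k x), f y := by
      rw [setIntegral_congr_set (Cb_ae k (idx k x))]
      refine setIntegral_congr_fun measurableSet_Icc fun y hy => ?_
      exact indicator_of_mem (Db_sub (idx_lt hx0) hy) f
    have h2 := hk k
    rw [h1, Measure.real, Db_vol]
    rw [Cb_vol] at h2
    rw [inv_mul_le_iff₀ (by positivity)]
    linarith
  · rw [tendsto_nhdsWithin_iff]
    constructor
    · have := (tendsto_pow_atTop_nhds_zero_of_lt_one (r := (1/2:ℝ)) (by norm_num)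
        (by norm_num)).const_mul (1/2)
      simpa [div_eq_mul_inv] using this
    · exact Filter.Eventually.of_forall fun k => by simp
  · refine Filter.Eventually.of_forall fun k => ?_
    have hm : x ∈ Cb k (idx k x) := mem_Cb.2 ⟨fun i => (mem_C0.1 hx0 i).1, rfl⟩
    rw [one_mul, ← Db_ball]
    simp only [Cb, mem_pi, mem_univ, true_implies, mem_Ico] at hm
    exact ⟨fun i => (hm i).1, fun i => (hm i).2.le⟩

lemma GR_aux {n : ℕ} {f : (Fin n → ℝ) → ℝ} {ε : ℝ} (hε : 0 < ε) (hf : GRcond f ε) {a : ℝ} {k : ℕ}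
    {m : Fin n → ℕ} (hm : ∀ i, m i < 2 ^ k)
    (ha : ∫ y in Cb k m, f y ≤ a * (volume (Cb k m)).toReal) :
    ∫ y in Cb k m, max (f y - a) 0 ≤ 1 / 2 * ε * a * (volume (Cb k m)).toReal := by
  have h1 := hf.2.2 (Db k m) ⟨k, m, hm, rfl⟩
  have hV : 0 < (volume (Cb k m)).toReal := by rw [Cb_vol]; positivity
  have hfin : volume (Cb k m) ≠ ⊤ := fun h => by simp [h] at hV
  unfold oscOn at h1
  set c := avgOn f (Db k m) with hc
  have hc' : c * (volume (Cb k m)).toReal = ∫ y in Cb k m, f y := by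
    rw [hc, avgOn, ← setIntegral_congr_set (Cb_ae k m), ← measure_congr (Cb_ae k m)]
    field_simp
  rw [← setIntegral_congr_set (Cb_ae k m), ← measure_congr (Cb_ae k m),
    inv_mul_le_iff₀ hV] at h1
  have hca : c ≤ a := le_of_mul_le_mul_right (hc' ▸ ha) hV
  have hi : IntegrableOn f (Cb k m) :=
    (hf.1.mono_set (Db_sub hm)).congr_set_ae (Cb_ae k m)
  have hic : IntegrableOn (fun _ => c) (Cb k m) := integrableOn_const hfin
  have hia : IntegrableOn (fun _ => a) (Cb k m) := integrableOn_const hfin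
  have hd : IntegrableOn (fun y => f y - c) (Cb k m) := hi.sub hic
  have h0 : ∫ y in Cb k m, (f y - c) = 0 := by
    rw [integral_sub hi hic, ← hc']; simp [Measure.real]; ring
  have h2 : ∫ y in Cb k m, max (f y - a) 0 ≤
      ∫ y in Cb k m, 1 / 2 * (|f y - c| + (f y - c)) := by
    apply integral_mono (Integrable.pos_part (hi.sub hia)) ((hd.abs.add hd).const_mul _)
    intro y
    change max (f y - a) 0 ≤ 1 / 2 * (|f y - c| + (f y - c))
    rcases le_total 0 (f y - c) with h | h
    · rw [abs_of_nonneg h]; exact max_le (by linarith) (by linarith)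
    · rw [abs_of_nonpos h]; exact max_le (by linarith) (by linarith)
  rw [integral_const_mul, integral_add hd.abs hd, h0, add_zero] at h2
  nlinarith [mul_le_mul_of_nonneg_left hca (mul_pos hε hV).le]

lemma main_aux {n : ℕ} {f : (Fin n → ℝ) → ℝ} {ε : ℝ} (hε : 0 < ε) (hf : GRcond f ε) {a b t : ℝ}
    (ha : 0 ≤ a) (hba : b ≤ a)
    (hQ : ∫ x in Q0 n, f x ≤ a)
    (hR : ∀ E ⊆ Q0 n, ∫ x in E, (f x - b) ≤ t * (a - b)) (ht : 0 ≤ t) :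
    ∫ x in Q0 n, max (f x - a) 0 ≤ 1 / 2 * ε * a * 2 ^ n * t := by
  obtain ⟨hfi, hf0, -⟩ := id hf
  have := fin_Q0 n
  let bad : ℕ → (Fin n → ℕ) → Prop := fun k m => ∃ m' : Fin n → ℕ, (∀ i, m' i / 2 = m i) ∧
    a * (volume (Cb (k+1) m')).toReal < ∫ y in Cb (k+1) m', f y
  let M : Set (ℕ × (Fin n → ℕ)) := {p | ∃ x ∈ Cb 0 (0 : Fin n → ℕ), p.2 = idx p.1 x ∧
    bad p.1 (idx p.1 x) ∧ ∀ j < p.1, ¬ bad j (idx j x)}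
  have hchild : ∀ p : M, ∃ m' : Fin n → ℕ, (∀ i, m' i / 2 = p.1.2 i) ∧
      a * (volume (Cb (p.1.1+1) m')).toReal < ∫ y in Cb (p.1.1+1) m', f y := by
    rintro ⟨p, x, hx, hp, hb, -⟩
    rw [← hp] at hb
    exact hb
  choose c hc1 hc2 using hchild
  -- averages along non bad chains
  have hav : ∀ x ∈ Cb 0 (0 : Fin n → ℕ), ∀ k, (∀ j < k, ¬ bad j (idx j x)) →
      ∫ y in Cb k (idx k x), f y ≤ a * (volume (Cb k (idx k x))).toReal := by
    intro x hx k hk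
    cases k with
    | zero =>
      rw [(mem_Cb.1 hx).2, Cb_vol, setIntegral_congr_set C0_ae]
      simpa using hQ
    | succ k =>
      by_contra! h
      refine hk k (Nat.lt_succ_self k) ⟨idx (k+1) x, fun i => ?_, h⟩
      rw [idx_div (Nat.le_succ k)]; simp
  let C : M → Set (Fin n → ℝ) := fun p => Cb p.1.1 p.1.2
  let C' : M → Set (Fin n → ℝ) := fun p => Cb (p.1.1 + 1) (c p)
  have hCC : ∀ p, C' p ⊆ C p := fun p => Cb_sub (hc1 p)
  have hCQ : ∀ p, C p ⊆ Cb 0 (0 : Fin n → ℕ) := by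
    rintro ⟨⟨k, m⟩, x, hx, hp, -⟩
    simp only at hp
    subst hp
    exact Cb_sub_C0 hx
  have hkey : ∀ p q : M, ∀ y, y ∈ C p → y ∈ C q → ¬ (p.1.1 < q.1.1) := by
    rintro ⟨⟨k, m⟩, x, hx, hp, hb, hn⟩ ⟨⟨k', m'⟩, x', hx', hp', hb', hn'⟩ y hy hy' hlt
    simp only at hp hp' hb hn hb' hn' hlt
    have e1 : idx k y = m := (mem_Cb.1 hy).2
    have e2 : idx k' y = m' := (mem_Cb.1 hy').2
    have e3 : idx k x' = idx k y := idx_congr hlt.le (by rw [e2, hp'])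
    apply hn' k hlt
    rw [e3, e1, hp]
    exact hb
  have hdisj : Pairwise (Function.onFun Disjoint C) := by
    intro p q hpq
    refine Set.disjoint_left.2 fun y hy hy' => hpq ?_
    have h1 : p.1.1 = q.1.1 :=
      le_antisymm (not_lt.1 (hkey q p y hy' hy)) (not_lt.1 (hkey p q y hy hy'))
    have e1 : idx p.1.1 y = p.1.2 := (mem_Cb.1 hy).2
    have e2 : idx q.1.1 y = q.1.2 := (mem_Cb.1 hy').2
    apply Subtype.ext
    apply Prod.ext h1
    rw [← e1, ← e2, h1]
  have hdisj' : Pairwise (Function.onFun Disjoint C') := fun p q hpq =>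
    (hdisj hpq).mono (hCC p) (hCC q)
  have hGQ : (⋃ p, C p) ⊆ Q0 n := iUnion_subset fun p => (hCQ p).trans C0_sub
  have hEQ : (⋃ p, C' p) ⊆ Q0 n := iUnion_subset fun p => (hCC p).trans ((hCQ p).trans C0_sub)
  have hGm : MeasurableSet (⋃ p, C p) := MeasurableSet.iUnion fun p => Cb_meas _ _
  have hm := int_max hfi a
  have hfa : IntegrableOn (fun x => f x - a) (Q0 n) := hfi.sub (integrable_const a)
  -- step 1
  have s1 : ∫ x in Q0 n, max (f x - a) 0 = ∫ x in ⋃ p, C p, max (f x - a) 0 := by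
    have hQm : MeasurableSet (Q0 n) := measurableSet_Icc
    refine setIntegral_eq_of_subset_of_ae_sdiff_eq_zero hQm.nullMeasurableSet hGQ ?_
    have hae : ∀ᵐ x ∂(volume : Measure (Fin n → ℝ)), x ∈ Q0 n → x ∈ Cb 0 (0 : Fin n → ℕ) := by
      filter_upwards [C0_ae (n := n)] with x hx hx'
      exact (iff_of_eq hx).2 hx'
    filter_upwards [hae, diff_aux hfi (a := a)] with x hx1 hx2 hx3
    have hx0 := hx1 hx3.1
    refine max_eq_right (sub_nonpos.2 (hx2 hx0 fun k => ?_))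
    apply hav x hx0
    intro j _ hb
    apply hx3.2
    classical
    have hex : ∃ j, bad j (idx j x) := ⟨j, hb⟩
    refine mem_iUnion.2 ⟨⟨(Nat.find hex, idx (Nat.find hex) x), x, hx0, rfl, Nat.find_spec hex,
      fun i hi => Nat.find_min hex hi⟩, ?_⟩
    exact mem_Cb.2 ⟨fun i => (mem_C0.1 hx0 i).1, rfl⟩
  have u1 := hasSum_integral_iUnion (s := C) (fun p => Cb_meas _ _) hdisj (hm.mono_set hGQ)
  have u2 := hasSum_integral_iUnion (μ := volume) (f := fun _ => (1:ℝ)) (s := C')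
    (fun p => Cb_meas _ _) hdisj' (IntegrableOn.mono_set (integrable_const (1:ℝ)) hEQ)
  have u3 := hasSum_integral_iUnion (s := C') (fun p => Cb_meas _ _) hdisj' (hfa.mono_set hEQ)
  set V := ∫ x in ⋃ p, C' p, (1:ℝ) with hV
  have s2 : ∫ x in ⋃ p, C p, max (f x - a) 0 ≤ 1 / 2 * ε * a * 2 ^ n * V := by
    refine hasSum_le (fun p => ?_) u1 (u2.mul_left _)
    obtain ⟨⟨⟨k, m⟩, x, hx, hp, hb, hn⟩, hpe⟩ : ∃ q, q = p := ⟨p, rfl⟩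
    simp only at hp hb hn
    have hC : C p = Cb k (idx k x) := by rw [← hp, ← hpe]
    have hk : p.1.1 = k := by rw [← hpe]
    have h := GR_aux hε hf (idx_lt hx) (hav x hx k hn)
    rw [hC]
    refine h.trans (le_of_eq ?_)
    have : ∫ x in C' p, (1:ℝ) = ((2:ℝ) ^ (k+1))⁻¹ ^ n := by
      rw [← Cb_vol (k+1) (c p)]
      simp only [C', hk]
      simp [Measure.real]
    rw [this, Cb_vol, mul_assoc (1 / 2 * ε * a)]
    congr 1
    rw [← mul_pow]; congr 1; rw [pow_succ]; field_simp
  have hV0 : 0 ≤ V := by rw [hV]; exact integral_nonneg fun _ => zero_le_one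
  have s3 : V ≤ t := by
    rcases isEmpty_or_nonempty M with hM | ⟨⟨p0⟩⟩
    · rw [hV]; simpa using ht
    · have hpos : ∀ p, 0 < ∫ x in C' p, (f x - a) := by
        intro p
        have hs : C' p ⊆ Q0 n := (subset_iUnion C' p).trans hEQ
        rw [integral_sub (hfi.mono_set hs) (IntegrableOn.mono_set (integrable_const a) hs)]
        have := hc2 p
        simp only [setIntegral_const, Measure.real, smul_eq_mul]
        simp only [C']
        linarith
      have h1 : 0 < ∫ x in ⋃ p, C' p, (f x - a) :=
        lt_of_lt_of_le (hpos p0) (le_hasSum u3 p0 fun q _ => (hpos q).le)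
      have h2 := hR _ hEQ
      have hiE := hfi.mono_set hEQ
      rw [integral_sub hiE (IntegrableOn.mono_set (integrable_const _) hEQ)] at h1 h2
      have e : ∀ d : ℝ, ∫ x in ⋃ p, C' p, d = V * d := by
        intro d; rw [hV]; simp
      rw [e] at h1 h2
      by_contra! h
      nlinarith
  rw [s1]
  refine s2.trans ?_
  exact mul_le_mul_of_nonneg_left s3 (by positivity)

/-- If `f ∈ GR_𝒟(Q₀,ε)` with `ε ∈ (0,2)`, then for every `t ∈ (0,1]`,
`(1/t) ∫_0^t |f*(u) − f**(t)| du ≤ 2ⁿ ε f**(t)`. -/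
theorem GR_oscillation_bound (n : ℕ) (hn : 1 ≤ n)
    (ε : ℝ) (hε : ε ∈ Set.Ioo (0:ℝ) 2)
    (f : (Fin n → ℝ) → ℝ) (hf : GRcond f ε)
    (fstar : ℝ → ℝ) (hfs : IsRearrangement (fun x => |f x|) fstar) :
    ∀ t ∈ Set.Ioc (0:ℝ) 1,
      t⁻¹ * ∫ u in Set.Ioc (0:ℝ) t, |fstar u - hardyAvg fstar t| ≤
        2 ^ n * ε * hardyAvg fstar t := by
  intro t ht
  obtain ⟨hfi, hf0, -⟩ := id hf
  have hba := g_le hfi hf0 hfs ht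
  have hl := lhs_le hfi hf0 hfs ht
  have hR : ∀ E ⊆ Q0 n, ∫ x in E, (f x - fstar t) ≤ t * (hardyAvg fstar t - fstar t) :=
    fun E hE => R_aux hfi hf0 hfs ht hE
  set a := hardyAvg fstar t
  have hQ : ∫ x in Q0 n, f x ≤ a := by
    have := fin_Q0 n
    have h := hR _ subset_rfl
    rw [integral_sub hfi (integrable_const _)] at h
    simp [Measure.real, volQ0] at h
    nlinarith [ht.1, ht.2]
  have ha : 0 ≤ a := le_trans (setIntegral_nonneg measurableSet_Icc hf0) hQ
  have hm := main_aux hε.1 hf ha hba hQ hR ht.1.le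
  rw [inv_mul_le_iff₀ ht.1]
  linarith
end
end
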